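/- arXiv:1802.04779 — 2 statements merged into one kernel-verified Lean document; each statement's English description precedes it below -/
import Mathlib

section
/- Let α, β > −1, n ≥ 1, let u : ℝ → ℝ be differentiable, and let x_0,…,x_n be distinct points such that u(x_0),…,u(x_{n−1}) are the n distinct roots of the Jacobi polynomial G = P_n^{α,β+1}, u(x_n) = 1, u(x_0),…,u(x_n) are pairwise distinct, and u'(x_i) ≠ 0 for all i. Let L_j be the generalized Lagrange functions on these nodes and D the matrix with entries d_{kj} = L_j'(x_k). Then for every k with 0 ≤ k ≤ n−1, the entry in the last column satisfies d_{kn} = u'(x_k) · P_{n−1}^{α+1,β+2}(u(x_k)) · n! · (α+β+n+2) · Γ(α+1) / (2 Γ(α+1+n)). -/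
/-- Jacobi polynomials `P_n^{α,β}` defined by the three-term recurrence. -/
noncomputable def jacobiP (α β : ℝ) : ℕ → ℝ → ℝ
  | 0, _ => 1
  | 1, x => (α + β + 2) * x / 2 + (α - β) / 2
  | K + 2, x =>
      ((2 * ((K : ℝ) + 1) + α + β + 1) * (2 * ((K : ℝ) + 1) + α + β + 2) /
            (2 * (((K : ℝ) + 1) + 1) * (((K : ℝ) + 1) + α + β + 1)) * x -
          (β ^ 2 - α ^ 2) * (2 * ((K : ℝ) + 1) + α + β + 1) /
            (2 * (((K : ℝ) + 1) + 1) * (((K : ℝ) + 1) + α + β + 1) *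
              (2 * ((K : ℝ) + 1) + α + β))) *
        jacobiP α β (K + 1) x -
      (((K : ℝ) + 1) + α) * (((K : ℝ) + 1) + β) * (2 * ((K : ℝ) + 1) + α + β + 2) /
            ((((K : ℝ) + 1) + 1) * (((K : ℝ) + 1) + α + β + 1) * (2 * ((K : ℝ) + 1) + α + β)) *
        jacobiP α β K x

open Finset

/-- `glW u x t = ∏ i, (u t − u (x i))`. -/
noncomputable def glW (u : ℝ → ℝ) {n : ℕ} (x : Fin (n + 1) → ℝ) : ℝ → ℝ :=
  fun t => ∏ i, (u t - u (x i))

/-- Generalized Lagrange function `L_j(t) = κ_j ∏_{i ≠ j} (u t − u (x i))`,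
with `κ_j = u'(x_j) / w'(x_j)`. -/
noncomputable def glL (u : ℝ → ℝ) {n : ℕ} (x : Fin (n + 1) → ℝ) (j : Fin (n + 1)) : ℝ → ℝ :=
  fun t => (deriv u (x j) / deriv (glW u x) (x j)) *
    ∏ i ∈ Finset.univ.erase j, (u t - u (x i))

/-- Coefficients of the Jacobi polynomial in powers of `(x-1)/2`. -/
noncomputable def jc (a b : ℝ) (n k : ℕ) : ℝ :=
  (∏ i ∈ Finset.range n, (a + 1 + i) / ((i : ℝ) + 1)) *
    ∏ i ∈ Finset.range k,
      (((n : ℝ) - i) * (n + a + b + 1 + i) / ((a + 1 + i) * ((i : ℝ) + 1)))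

lemma jc_succ_k (a b : ℝ) (n k : ℕ) : jc a b n (k + 1) =
    jc a b n k * (((n : ℝ) - k) * (n + a + b + 1 + k) / ((a + 1 + k) * ((k : ℝ) + 1))) := by
  simp only [jc, Finset.prod_range_succ]; ring

lemma jc_zero_of_lt (a b : ℝ) (n k : ℕ) (h : n < k) : jc a b n k = 0 := by
  unfold jc
  rw [Finset.prod_eq_zero (i := n) (s := Finset.range k)]
  · simp
  · simpa using h
  · simp

lemma jc_succ_n (a b : ℝ) (ha : -1 < a) (n k : ℕ) :
    ((n : ℝ) + 1 - k) * (n + a + b + 1) * jc a b (n + 1) k =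
      (n + 1 + a) * (n + a + b + 1 + k) * jc a b n k := by
  induction k with
  | zero =>
    have h : (n : ℝ) + 1 ≠ 0 := by positivity
    simp only [jc, Finset.prod_range_succ, Finset.prod_range_zero]
    push_cast
    field_simp
    ring
  | succ k ih =>
    have hk : (0 : ℝ) ≤ k := Nat.cast_nonneg k
    have h1 : a + 1 + k ≠ 0 := by linarith
    have h2 : (k : ℝ) + 1 ≠ 0 := by positivity
    rw [jc_succ_k, jc_succ_k]
    push_cast
    field_simp
    linear_combination ((n : ℝ) - k) * (n + a + b + 2 + k) * ih

lemma jc_deriv (a b : ℝ) (ha : -1 < a) (n k : ℕ) :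
    jc a b (n + 1) (k + 1) * ((k : ℝ) + 1) =
      (n + 1 + a + b + 1) * jc (a + 1) (b + 1) n k := by
  induction k with
  | zero =>
    have h1 : a + 1 ≠ 0 := by linarith
    have key : ∀ n : ℕ, (∏ i ∈ Finset.range (n + 1), (a + 1 + i) / ((i : ℝ) + 1)) * ((n : ℝ) + 1)
        = (a + 1) * ∏ i ∈ Finset.range n, (a + 1 + 1 + i) / ((i : ℝ) + 1) := by
      intro n
      induction n with
      | zero => simp
      | succ n ih =>
        have h : (n : ℝ) + 1 ≠ 0 := by positivity
        have h' : (n : ℝ) + 1 + 1 ≠ 0 := by positivity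
        rw [Finset.prod_range_succ _ (n + 1), Finset.prod_range_succ (fun i : ℕ => (a + 1 + 1 + (i : ℝ)) / ((i : ℝ) + 1)) n,
          ← mul_assoc (a + 1), ← ih]
        generalize (∏ i ∈ Finset.range (n + 1), (a + 1 + (i : ℝ)) / ((i : ℝ) + 1)) = Z
        push_cast
        field_simp
        ring
    have := key n
    rw [jc_succ_k]
    simp only [jc, Finset.prod_range_zero]
    generalize (∏ i ∈ Finset.range (n + 1), (a + 1 + (i : ℝ)) / ((i : ℝ) + 1)) = Z at *
    generalize (∏ i ∈ Finset.range n, (a + 1 + 1 + (i : ℝ)) / ((i : ℝ) + 1)) = W at *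
    clear key
    push_cast
    simp only [add_zero, sub_zero, zero_add, mul_one]
    field_simp
    linear_combination ((n : ℝ) + 1 + a + b + 1) * this
  | succ k ih =>
    have hk : (0 : ℝ) ≤ k := Nat.cast_nonneg k
    have h1 : a + 1 + 1 + k ≠ 0 := by linarith
    have h1' : a + 1 + (k + 1) ≠ 0 := by linarith
    have h2 : (k : ℝ) + 1 ≠ 0 := by positivity
    have h3 : (k : ℝ) + 1 + 1 ≠ 0 := by positivity
    rw [jc_succ_k, jc_succ_k (a + 1), ← mul_assoc, ← ih]
    push_cast
    field_simp
    ring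

/-- Jacobi polynomial in the variable `(x-1)/2`. -/
noncomputable def jpoly (a b : ℝ) (n : ℕ) : Polynomial ℝ :=
  ∑ k ∈ Finset.range (n + 1), Polynomial.monomial k (jc a b n k)

lemma jpoly_coeff (a b : ℝ) (n k : ℕ) : (jpoly a b n).coeff k = jc a b n k := by
  simp only [jpoly, Polynomial.finsetSum_coeff, Polynomial.coeff_monomial]
  rw [Finset.sum_ite_eq']
  split_ifs with h
  · rfl
  · rw [jc_zero_of_lt]
    simpa using h

lemma jpoly_natDegree (a b : ℝ) (n : ℕ) : (jpoly a b n).natDegree ≤ n := by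
  rw [Polynomial.natDegree_le_iff_coeff_eq_zero]
  intro k hk
  rw [jpoly_coeff, jc_zero_of_lt _ _ _ _ hk]

lemma co_eq (a b N : ℝ) (h2 : N + 1 + 1 ≠ 0)
    (h3 : N + 1 + a + b + 1 ≠ 0) (h4 : 2 * (N + 1) + a + b ≠ 0) :
    ((2 * (N + 1) + a + b + 1) * (2 * (N + 1) + a + b + 2) /
            (2 * ((N + 1) + 1) * ((N + 1) + a + b + 1)) -
          (b ^ 2 - a ^ 2) * (2 * (N + 1) + a + b + 1) /
            (2 * ((N + 1) + 1) * ((N + 1) + a + b + 1) *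
              (2 * (N + 1) + a + b))) =
      (2 * N + a + b + 3) * ((2 * N + a + b + 4) * (2 * N + a + b + 2) - (b ^ 2 - a ^ 2)) /
        (2 * (N + 2) * (N + a + b + 2) * (2 * N + a + b + 2)) := by
  obtain ⟨T, hT⟩ : ∃ T, T = 2 * (N + 1) + a + b := ⟨_, rfl⟩
  obtain ⟨S, hS⟩ : ∃ S, S = N + 1 + a + b + 1 := ⟨_, rfl⟩
  have e1 : 2 * N + a + b + 2 = T := by rw [hT]; ring
  have e2 : N + a + b + 2 = S := by rw [hS]; ring
  have e3 : N + 2 = N + 1 + 1 := by ring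
  rw [← hT] at h4 ⊢
  rw [← hS] at h3 ⊢
  rw [e1, e2, e3]
  field_simp
  have e4 : 2 * N + a + b = T - 2 := by rw [hT]; ring
  rw [e4]
  ring

lemma rat0 (a b N Z : ℝ) (h1 : N + 1 ≠ 0) (h2 : N + 1 + 1 ≠ 0)
    (h3 : N + 1 + a + b + 1 ≠ 0) (h4 : 2 * (N + 1) + a + b ≠ 0) :
    Z * ((a + 1 + N) / (N + 1)) * ((a + 1 + (N + 1)) / (N + 1 + 1)) * 1 =
      ((2 * (N + 1) + a + b + 1) * (2 * (N + 1) + a + b + 2) /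
            (2 * ((N + 1) + 1) * ((N + 1) + a + b + 1)) -
          (b ^ 2 - a ^ 2) * (2 * (N + 1) + a + b + 1) /
            (2 * ((N + 1) + 1) * ((N + 1) + a + b + 1) *
              (2 * (N + 1) + a + b))) * (Z * ((a + 1 + N) / (N + 1)) * 1) -
      ((N + 1) + a) * ((N + 1) + b) * (2 * (N + 1) + a + b + 2) /
            (((N + 1) + 1) * ((N + 1) + a + b + 1) * (2 * (N + 1) + a + b)) * (Z * 1) := by
  rw [co_eq a b N h2 h3 h4]
  obtain ⟨T, hT⟩ : ∃ T, T = 2 * (N + 1) + a + b := ⟨_, rfl⟩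
  obtain rfl : b = T - 2 * N - 2 - a := by rw [hT]; ring
  rw [← hT] at h4 ⊢
  have e1 : 2 * N + a + (T - 2 * N - 2 - a) + 2 = T := by ring
  have e2 : N + 1 + a + (T - 2 * N - 2 - a) + 1 = T - N := by ring
  have e3 : N + a + (T - 2 * N - 2 - a) + 2 = T - N := by ring
  have e4 : N + 1 + 1 = N + 2 := by ring
  rw [e2] at h3
  rw [e4] at h2
  rw [e1, e2, e3, e4]
  field_simp
  ring

lemma rat1 (a b N M C : ℝ) (h2 : N + 1 + 1 ≠ 0)
    (h3 : N + 1 + a + b + 1 ≠ 0) (h4 : 2 * (N + 1) + a + b ≠ 0) (h5 : N + 1 + a ≠ 0)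
    (h6 : N + a + b + 1 + M ≠ 0) (h7 : N + 1 + 1 - M ≠ 0) (h8 : a + 1 + M ≠ 0)
    (h9 : M + 1 ≠ 0) :
    (N + 1 + 1 + a) * (N + 1 + a + b + 1 + M) * C / ((N + 1 + 1 - M) * (N + 1 + a + b + 1)) *
      ((N + 2 - M) * (N + 2 + a + b + 1 + M) / ((a + 1 + M) * (M + 1))) =
      ((2 * (N + 1) + a + b + 1) * (2 * (N + 1) + a + b + 2) /
            (2 * ((N + 1) + 1) * ((N + 1) + a + b + 1)) -
          (b ^ 2 - a ^ 2) * (2 * (N + 1) + a + b + 1) /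
            (2 * ((N + 1) + 1) * ((N + 1) + a + b + 1) *
              (2 * (N + 1) + a + b))) * (C * ((N + 1 - M) * (N + 1 + a + b + 1 + M) / ((a + 1 + M) * (M + 1)))) +
      2 * ((2 * (N + 1) + a + b + 1) * (2 * (N + 1) + a + b + 2) /
            (2 * ((N + 1) + 1) * ((N + 1) + a + b + 1))) * C -
      ((N + 1) + a) * ((N + 1) + b) * (2 * (N + 1) + a + b + 2) /
            (((N + 1) + 1) * ((N + 1) + a + b + 1) * (2 * (N + 1) + a + b)) *
        ((N + 1 - M) * (N + a + b + 1) * C / ((N + 1 + a) * (N + a + b + 1 + M)) *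
          ((N - M) * (N + a + b + 1 + M) / ((a + 1 + M) * (M + 1)))) := by
  rw [co_eq a b N h2 h3 h4]
  obtain ⟨T, hT⟩ : ∃ T, T = 2 * (N + 1) + a + b := ⟨_, rfl⟩
  obtain rfl : b = T - 2 * N - 2 - a := by rw [hT]; ring
  rw [← hT] at h4 ⊢
  have e1 : 2 * N + a + (T - 2 * N - 2 - a) + 2 = T := by ring
  have e2 : N + 1 + a + (T - 2 * N - 2 - a) + 1 = T - N := by ring
  have e3 : N + a + (T - 2 * N - 2 - a) + 2 = T - N := by ring
  have e4 : N + 1 + 1 = N + 2 := by ring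
  have e5 : N + a + (T - 2 * N - 2 - a) + 1 = T - N - 1 := by ring
  rw [e2] at h3
  rw [e4] at h2 h7
  rw [e5] at h6
  rw [e1, e2, e3, e4, e5]
  field_simp
  ring

lemma jc_rec0 (a b : ℝ) (ha : -1 < a) (hab : -1 < a + b) (n : ℕ) :
    jc a b (n + 2) 0 =
      ((2 * ((n : ℝ) + 1) + a + b + 1) * (2 * ((n : ℝ) + 1) + a + b + 2) /
            (2 * (((n : ℝ) + 1) + 1) * (((n : ℝ) + 1) + a + b + 1)) -
          (b ^ 2 - a ^ 2) * (2 * ((n : ℝ) + 1) + a + b + 1) /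
            (2 * (((n : ℝ) + 1) + 1) * (((n : ℝ) + 1) + a + b + 1) *
              (2 * ((n : ℝ) + 1) + a + b))) * jc a b (n + 1) 0 -
      (((n : ℝ) + 1) + a) * (((n : ℝ) + 1) + b) * (2 * ((n : ℝ) + 1) + a + b + 2) /
            ((((n : ℝ) + 1) + 1) * (((n : ℝ) + 1) + a + b + 1) * (2 * ((n : ℝ) + 1) + a + b)) *
        jc a b n 0 := by
  have hn : (0 : ℝ) ≤ n := Nat.cast_nonneg n
  have h1 : (n : ℝ) + 1 ≠ 0 := by positivity
  have h2 : (n : ℝ) + 1 + 1 ≠ 0 := by positivity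
  have h3 : (n : ℝ) + 1 + a + b + 1 ≠ 0 := by linarith
  have h4 : 2 * ((n : ℝ) + 1) + a + b ≠ 0 := by linarith
  simp only [jc, Finset.prod_range_succ, Finset.prod_range_zero]
  generalize (∏ i ∈ Finset.range n, (a + 1 + (i : ℝ)) / ((i : ℝ) + 1)) = Z
  push_cast
  generalize (n : ℝ) = N at *
  exact rat0 a b N Z h1 h2 h3 h4

lemma jc_rec1 (a b : ℝ) (ha : -1 < a) (hab : -1 < a + b) (n m : ℕ) :
    jc a b (n + 2) (m + 1) =
      ((2 * ((n : ℝ) + 1) + a + b + 1) * (2 * ((n : ℝ) + 1) + a + b + 2) /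
            (2 * (((n : ℝ) + 1) + 1) * (((n : ℝ) + 1) + a + b + 1)) -
          (b ^ 2 - a ^ 2) * (2 * ((n : ℝ) + 1) + a + b + 1) /
            (2 * (((n : ℝ) + 1) + 1) * (((n : ℝ) + 1) + a + b + 1) *
              (2 * ((n : ℝ) + 1) + a + b))) * jc a b (n + 1) (m + 1) +
      2 * ((2 * ((n : ℝ) + 1) + a + b + 1) * (2 * ((n : ℝ) + 1) + a + b + 2) /
            (2 * (((n : ℝ) + 1) + 1) * (((n : ℝ) + 1) + a + b + 1))) * jc a b (n + 1) m -
      (((n : ℝ) + 1) + a) * (((n : ℝ) + 1) + b) * (2 * ((n : ℝ) + 1) + a + b + 2) /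
            ((((n : ℝ) + 1) + 1) * (((n : ℝ) + 1) + a + b + 1) * (2 * ((n : ℝ) + 1) + a + b)) *
        jc a b n (m + 1) := by
  rcases Nat.lt_or_ge (n + 1) m with hm | hm
  · simp only [jc_zero_of_lt a b (n + 2) (m + 1) (by omega),
      jc_zero_of_lt a b (n + 1) (m + 1) (by omega),
      jc_zero_of_lt a b (n + 1) m (by omega), jc_zero_of_lt a b n (m + 1) (by omega)]
    ring
  have hn : (0 : ℝ) ≤ n := Nat.cast_nonneg n
  have hm0 : (0 : ℝ) ≤ m := Nat.cast_nonneg m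
  have hmn : (m : ℝ) ≤ n + 1 := by exact_mod_cast hm
  have h2 : (n : ℝ) + 1 + 1 ≠ 0 := by positivity
  have h3 : (n : ℝ) + 1 + a + b + 1 ≠ 0 := by linarith
  have h4 : 2 * ((n : ℝ) + 1) + a + b ≠ 0 := by linarith
  have h5 : (n : ℝ) + 1 + a ≠ 0 := by linarith
  have h6 : (n : ℝ) + a + b + 1 + m ≠ 0 := by linarith
  have h7 : (n : ℝ) + 1 + 1 - m ≠ 0 := by linarith
  have h8 : a + 1 + m ≠ 0 := by linarith
  have h9 : (m : ℝ) + 1 ≠ 0 := by positivity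
  have e1 : jc a b n m = ((n : ℝ) + 1 - m) * (n + a + b + 1) * jc a b (n + 1) m /
      ((n + 1 + a) * (n + a + b + 1 + m)) := by
    rw [eq_div_iff (mul_ne_zero h5 h6), jc_succ_n a b ha]; ring
  have e2 : jc a b (n + 2) m = ((n : ℝ) + 1 + 1 + a) * (n + 1 + a + b + 1 + m) *
      jc a b (n + 1) m / (((n : ℝ) + 1 + 1 - m) * (n + 1 + a + b + 1)) := by
    rw [eq_div_iff (mul_ne_zero h7 h3)]
    have := jc_succ_n a b ha (n + 1) m
    push_cast at this
    linear_combination this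
  rw [jc_succ_k, jc_succ_k, jc_succ_k, e1, e2]
  generalize jc a b (n + 1) m = C
  push_cast
  generalize (n : ℝ) = N at *
  generalize (m : ℝ) = M at *
  have := rat1 a b N M C h2 h3 h4 h5 h6 h7 h8 h9
  linear_combination this

open Polynomial in
lemma jacobi_eq (a b : ℝ) (ha : -1 < a) (hab : -1 < a + b) (n : ℕ) (x : ℝ) :
    jacobiP a b n x = (jpoly a b n).eval ((x - 1) / 2) := by
  induction n using Nat.strong_induction_on with
  | _ n ih =>
  match n with
  | 0 => simp [jacobiP, jpoly, jc]
  | 1 =>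
    have h1 : a + 1 ≠ 0 := by linarith
    simp [jacobiP, jpoly, jc, Finset.sum_range_succ]
    field_simp
    ring
  | K + 2 =>
    rw [jacobiP, ih (K + 1) (by omega), ih K (by omega)]
    generalize hA : (2 * ((K : ℝ) + 1) + a + b + 1) * (2 * ((K : ℝ) + 1) + a + b + 2) /
            (2 * (((K : ℝ) + 1) + 1) * (((K : ℝ) + 1) + a + b + 1)) = A
    generalize hB : (b ^ 2 - a ^ 2) * (2 * ((K : ℝ) + 1) + a + b + 1) /
            (2 * (((K : ℝ) + 1) + 1) * (((K : ℝ) + 1) + a + b + 1) *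
              (2 * ((K : ℝ) + 1) + a + b)) = B
    generalize hC : (((K : ℝ) + 1) + a) * (((K : ℝ) + 1) + b) * (2 * ((K : ℝ) + 1) + a + b + 2) /
            ((((K : ℝ) + 1) + 1) * (((K : ℝ) + 1) + a + b + 1) * (2 * ((K : ℝ) + 1) + a + b)) = D
    have key : jpoly a b (K + 2) = C (A - B) * jpoly a b (K + 1) +
        C (2 * A) * (X * jpoly a b (K + 1)) - C D * jpoly a b K := by
      ext k
      rw [coeff_sub, coeff_add, coeff_C_mul, coeff_C_mul, coeff_C_mul]
      cases k with
      | zero =>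
        simp only [jpoly_coeff, coeff_X_mul_zero]
        rw [jc_rec0 a b ha hab, hA, hB, hC]; ring
      | succ m =>
        simp only [jpoly_coeff, coeff_X_mul]
        rw [jc_rec1 a b ha hab, hA, hB, hC]
    rw [key]
    simp only [eval_sub, eval_add, eval_mul, eval_C, eval_X]
    ring

lemma jpoly_derivative (a b : ℝ) (ha : -1 < a) (n : ℕ) :
    Polynomial.derivative (jpoly a b (n + 1)) =
      Polynomial.C ((n : ℝ) + 1 + a + b + 1) * jpoly (a + 1) (b + 1) n := by
  ext k
  rw [Polynomial.coeff_derivative, Polynomial.coeff_C_mul, jpoly_coeff, jpoly_coeff, jc_deriv a b ha]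

lemma jacobi_hasDeriv (a b : ℝ) (ha : -1 < a) (hab : -1 < a + b) (n : ℕ) (x : ℝ) :
    HasDerivAt (jacobiP a b (n + 1))
      (((n : ℝ) + 1 + a + b + 1) * jacobiP (a + 1) (b + 1) n x / 2) x := by
  have e : jacobiP a b (n + 1) = fun x => (jpoly a b (n + 1)).eval ((x - 1) / 2) :=
    funext fun x => jacobi_eq a b ha hab _ x
  rw [e, jacobi_eq (a + 1) (b + 1) (by linarith) (by linarith)]
  have h1 : HasDerivAt (fun x : ℝ => (x - 1) / 2) (1 / 2) x :=
    ((hasDerivAt_id x).sub_const 1).div_const 2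
  have h2 := ((jpoly a b (n + 1)).hasDerivAt ((x - 1) / 2)).comp x h1
  rw [jpoly_derivative a b ha] at h2
  refine h2.congr_deriv ?_
  simp only [Polynomial.eval_mul, Polynomial.eval_C]
  ring

lemma jacobi_one (a b : ℝ) (ha : -1 < a) (hab : -1 < a + b) (n : ℕ) :
    jacobiP a b n 1 = Real.Gamma (a + 1 + n) / (n.factorial * Real.Gamma (a + 1)) := by
  rw [jacobi_eq a b ha hab]
  have : ((1 : ℝ) - 1) / 2 = 0 := by norm_num
  rw [this, ← Polynomial.coeff_zero_eq_eval_zero, jpoly_coeff]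
  simp only [jc, Finset.prod_range_zero, mul_one]
  have hG : Real.Gamma (a + 1) ≠ 0 := (Real.Gamma_pos_of_pos (by linarith)).ne'
  induction n with
  | zero => simp [hG]
  | succ n ih =>
    have hn : (0 : ℝ) ≤ n := Nat.cast_nonneg n
    rw [Finset.prod_range_succ, ih, Nat.factorial_succ]
    push_cast
    rw [← add_assoc, Real.Gamma_add_one (by linarith : a + 1 + (n : ℝ) ≠ 0)]
    have : (n.factorial : ℝ) ≠ 0 := by positivity
    field_simp

theorem gl_jacobi_radau_last_column (α β : ℝ) (hα : -1 < α) (hβ : -1 < β)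
    (n : ℕ) (hn : 1 ≤ n) (u : ℝ → ℝ) (x : Fin (n + 1) → ℝ)
    (hu : Differentiable ℝ u)
    (hx : Function.Injective x)
    (hux : Function.Injective (u ∘ x))
    (hu' : ∀ i, deriv u (x i) ≠ 0)
    (hroots : ∀ i : Fin (n + 1), (i : ℕ) < n → jacobiP α (β + 1) n (u (x i)) = 0)
    (hlast : u (x (Fin.last n)) = 1)
    (k : Fin (n + 1)) (hk : (k : ℕ) < n) :
    deriv (glL u x (Fin.last n)) (x k) =
      deriv u (x k) * jacobiP (α + 1) (β + 2) (n - 1) (u (x k)) * (n.factorial : ℝ) *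
        (α + β + (n : ℝ) + 2) * Real.Gamma (α + 1) / (2 * Real.Gamma (α + 1 + (n : ℝ))) := by
  have hab : -1 < α + (β + 1) := by linarith
  set P : ℝ → ℝ := jacobiP α (β + 1) n with hP
  set s := (Finset.univ : Finset (Fin (n + 1))).erase (Fin.last n) with hs
  have hne : ∀ i ∈ s, 1 - u (x i) ≠ 0 := by
    intro i hi h
    have : u (x i) = u (x (Fin.last n)) := by rw [hlast]; linarith
    exact (Finset.mem_erase.1 hi).1 (hux this)
  have hprod : ∏ i ∈ s, (1 - u (x i)) ≠ 0 := Finset.prod_ne_zero_iff.2 hne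
  have hlt : ∀ i ∈ s, (i : ℕ) < n := by
    intro i hi
    have h1 := (Finset.mem_erase.1 hi).1
    have h2 := i.isLt
    have h3 : (i : ℕ) ≠ n := fun h => h1 (Fin.ext (by simpa using h))
    omega
  have hcard : s.card = n := by simp [hs]
  have hG1 : P 1 = Real.Gamma (α + 1 + n) / (n.factorial * Real.Gamma (α + 1)) :=
    jacobi_one α (β + 1) hα hab n
  have hga : Real.Gamma (α + 1) ≠ 0 := (Real.Gamma_pos_of_pos (by linarith)).ne'
  have hgan : Real.Gamma (α + 1 + n) ≠ 0 :=
    (Real.Gamma_pos_of_pos (by have : (0 : ℝ) ≤ n := Nat.cast_nonneg n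
                               linarith)).ne'
  have hfac : (n.factorial : ℝ) ≠ 0 := by positivity
  have hG1' : P 1 ≠ 0 := by rw [hG1]; positivity
  -- interpolation
  have hinterp : ∀ t, P t * ∏ i ∈ s, (1 - u (x i)) = P 1 * ∏ i ∈ s, (t - u (x i)) := by
    let q : Polynomial ℝ := (jpoly α (β + 1) n).comp
      (Polynomial.C (1 / 2) * Polynomial.X + Polynomial.C (-(1 / 2)))
    have hq : ∀ t, q.eval t = P t := by
      intro t
      rw [hP, jacobi_eq α (β + 1) hα hab]
      simp only [q, Polynomial.eval_comp, Polynomial.eval_add, Polynomial.eval_mul,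
        Polynomial.eval_C, Polynomial.eval_X]
      congr 1
      ring
    have hqd : q.natDegree ≤ n := by
      refine Polynomial.natDegree_comp_le.trans ?_
      calc _ ≤ n * 1 := Nat.mul_le_mul (jpoly_natDegree _ _ _) Polynomial.natDegree_linear_le
        _ = n := mul_one n
    let r : Polynomial ℝ := ∏ i ∈ s, (Polynomial.X - Polynomial.C (u (x i)))
    have hr : ∀ t, r.eval t = ∏ i ∈ s, (t - u (x i)) := by
      intro t; simp [r, Polynomial.eval_prod]
    have hrd : r.natDegree ≤ n := by
      simp only [r]
      rw [Polynomial.natDegree_finsetProd_X_sub_C_eq_card, hcard]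
    let f : Polynomial ℝ := q * Polynomial.C (∏ i ∈ s, (1 - u (x i))) - Polynomial.C (P 1) * r
    have hfe : ∀ t, f.eval t = P t * ∏ i ∈ s, (1 - u (x i)) - P 1 * ∏ i ∈ s, (t - u (x i)) := by
      intro t
      simp only [f, Polynomial.eval_sub, Polynomial.eval_mul, Polynomial.eval_C, hq, hr]
    have hf : f = 0 := by
      refine Polynomial.eq_zero_of_natDegree_lt_card_of_eval_eq_zero f hux ?_ ?_
      · intro i
        rw [hfe]
        by_cases hi : i = Fin.last n
        · simp only [Function.comp, hi, hlast]; ring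
        · have his : i ∈ s := Finset.mem_erase.2 ⟨hi, Finset.mem_univ _⟩
          have h0 : P (u (x i)) = 0 := hroots i (hlt i his)
          simp only [Function.comp, h0]
          rw [Finset.prod_eq_zero (f := fun j => u (x i) - u (x j)) his (sub_self _)]
          ring
      · rw [Fintype.card_fin]
        refine Nat.lt_succ_of_le ((Polynomial.natDegree_sub_le _ _).trans (max_le ?_ ?_))
        · exact (Polynomial.natDegree_mul_C_le _ _).trans hqd
        · exact (Polynomial.natDegree_C_mul_le _ _).trans hrd
    intro t
    have := hfe t
    rw [hf, Polynomial.eval_zero] at this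
    linarith
  have hw : deriv (glW u x) (x (Fin.last n)) =
      deriv u (x (Fin.last n)) * ∏ i ∈ s, (1 - u (x i)) := by
    have e : glW u x = fun t => (u t - 1) * ∏ i ∈ s, (u t - u (x i)) := by
      funext t
      simp only [glW]
      rw [← Finset.mul_prod_erase _ _ (Finset.mem_univ (Fin.last n)), hlast]
    have hd : DifferentiableAt ℝ (fun t => ∏ i ∈ s, (u t - u (x i))) (x (Fin.last n)) := by
      fun_prop
    have h1 := ((hu (x (Fin.last n))).hasDerivAt.sub_const 1).mul hd.hasDerivAt
    rw [e]
    refine (HasDerivAt.deriv h1).trans ?_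
    rw [hlast]; ring
  have hL : glL u x (Fin.last n) = fun t => (P 1)⁻¹ * P (u t) := by
    funext t
    have h0 := hu' (Fin.last n)
    have h1 := hinterp (u t)
    simp only [glL]
    rw [hw, ← hs]
    field_simp
    linear_combination -h1
  obtain ⟨m, rfl⟩ : ∃ m, n = m + 1 := ⟨n - 1, by omega⟩
  have hd := ((jacobi_hasDeriv α (β + 1) hα hab m (u (x k))).comp (x k)
    (hu (x k)).hasDerivAt).const_mul (P 1)⁻¹
  rw [hL]
  refine (HasDerivAt.deriv hd).trans ?_
  have e2 : β + 1 + 1 = β + 2 := by ring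
  rw [hG1, e2, Nat.add_sub_cancel]
  push_cast at hgan ⊢
  field_simp
  ring
end

section
/- Let α, β > −1, n ≥ 1, let u : ℝ → ℝ be differentiable, and let x_0,…,x_n be distinct points such that u(x_0),…,u(x_{n−1}) are the n distinct roots of the Jacobi polynomial G = P_n^{α,β+1}, u(x_n) = 1, u(x_0),…,u(x_n) are pairwise distinct, and u'(x_i) ≠ 0 for all i. Let L_j be the generalized Lagrange functions on these nodes and D the matrix with entries d_{kj} = L_j'(x_k). Then for all interior indices j ≠ k with 0 ≤ j, k ≤ n−1, d_{kj} = ( u'(x_k) (u(x_k) − u(x_n)) / ( (u(x_j) − u(x_n)) (u(x_k) − u(x_j)) ) ) · ( P_{n−1}^{α+1,β+2}(u(x_k)) / P_{n−1}^{α+1,β+2}(u(x_j)) ). -/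
open Finset

set_option maxRecDepth 20000 in
set_option maxHeartbeats 1000000 in
lemma alg1 (m w δ x P0 P1 P2 E0 E1 E2 : ℝ) (h1 : m + 2 ≠ 0) (h2 : w - m ≠ 0) (h3 : w ≠ 0)
    (hd : 2 * (m + 2) * (w - m) * w * E2 = (w + 1) * w * (w + 2) * (1 - x ^ 2) * P1
      + (w + 1) * (w * (w + 2) * x + (w - 2 * m - 2) * δ) * E1
      - (w ^ 2 - δ ^ 2) * (w + 2) / 2 * E0)
    (hr : 2 * (m + 2) * (w - m) * w * P2 =
      (w + 1) * (w * (w + 2) * x + (w - 2 * m - 2) * δ) * P1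
      - (w ^ 2 - δ ^ 2) * (w + 2) / 2 * P0)
    (hl : w * E1 = (m + 1) * (δ - w * x) * P1 + (w ^ 2 - δ ^ 2) / 2 * P0)
    (ht : w * E0 = (w - m - 1) * (δ + w * x) * P0 - 2 * (m + 1) * (w - m - 1) * P1) :
    (w + 2) * E2 = (m + 2) * (δ - (w + 2) * x) * P2 + ((w + 2) ^ 2 - δ ^ 2) / 2 * P1 := by
  apply mul_left_cancel₀ (mul_ne_zero (mul_ne_zero h1 h2) (mul_ne_zero h3 h3))
  linear_combination (1 / 2) * ((w + 2) * w * hd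
    + (w + 2) * ((w + 1) * (w * (w + 2) * x + (w - 2 * m - 2) * δ)) * hl
    - (w + 2) * ((w ^ 2 - δ ^ 2) * (w + 2) / 2) * ht
    - (m + 2) * (δ - (w + 2) * x) * w * hr)

set_option maxRecDepth 20000 in
set_option maxHeartbeats 1000000 in
lemma alg2 (k w δ x P1 P2 P3 E1 E2 E3 : ℝ) (h4 : w - k - 1 ≠ 0)
    (h6 : w + 2 ≠ 0) (h3 : w ≠ 0) (h5 : k + 3 ≠ 0)
    (hl2 : (w + 2) * E3 = (k + 3) * (δ - (w + 2) * x) * P3 + ((w + 2) ^ 2 - δ ^ 2) / 2 * P2)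
    (hl1 : w * E2 = (k + 2) * (δ - w * x) * P2 + (w ^ 2 - δ ^ 2) / 2 * P1)
    (ht : w * E1 = (w - k - 2) * (δ + w * x) * P1 - 2 * (k + 2) * (w - k - 2) * P2)
    (hr : 2 * (k + 3) * (w - k - 1) * w * P3 =
      (w + 1) * (w * (w + 2) * x + (w - 2 * k - 4) * δ) * P2
      - (w ^ 2 - δ ^ 2) * (w + 2) / 2 * P1) :
    4 * (k + 2) * w * (w - k - 1) * (w - k - 2) * E3 =
      2 * ((w + 1) * (w * (w + 2) * x + (w - 2 * k - 2) * δ)) * (w - k - 2) * E2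
      - 2 * ((w ^ 2 - δ ^ 2) * (w + 2) / 2) * (w - k - 1) * E1 := by
  apply mul_left_cancel₀ (mul_ne_zero h6 h3)
  linear_combination 4 * (k + 2) * w * (w - k - 1) * (w - k - 2) * w * hl2
    - 2 * ((w + 1) * (w * (w + 2) * x + (w - 2 * k - 2) * δ)) * (w - k - 2) * (w + 2) * hl1
    + 2 * ((w ^ 2 - δ ^ 2) * (w + 2) / 2) * (w - k - 1) * (w + 2) * ht
    + 2 * (k + 2) * w * (w - k - 2) * (δ - (w + 2) * x) * hr

lemma alg3 (k w A B E1 E2 E3 F0 F1 F2 : ℝ) (h1 : k + 2 ≠ 0) (h3 : w ≠ 0)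
    (h4 : w - k - 1 ≠ 0) (h2 : w - k - 2 ≠ 0)
    (h : 4 * (k + 2) * w * (w - k - 1) * (w - k - 2) * E3 =
      2 * A * (w - k - 2) * E2 - 2 * B * (w - k - 1) * E1)
    (hq : 2 * (k + 2) * (w - k) * w * F2 = A * F1 - B * F0)
    (e1 : E2 = (w - k - 1) / 2 * F1) (e0 : E1 = (w - k - 2) / 2 * F0) :
    E3 = (w - k) / 2 * F2 := by
  apply mul_left_cancel₀ (mul_ne_zero (mul_ne_zero h1 h3) (mul_ne_zero h4 h2))
  subst e1 e0
  linear_combination (1 / 4) * h - (1 / 4) * (w - k - 1) * (w - k - 2) * hq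

open Polynomial in
/-- Jacobi polynomials as elements of `ℝ[X]`. -/
noncomputable def jp (a b : ℝ) : ℕ → ℝ[X]
  | 0 => 1
  | 1 => C ((a + b + 2) / 2) * X + C ((a - b) / 2)
  | K + 2 =>
      (C ((2 * ((K : ℝ) + 1) + a + b + 1) * (2 * ((K : ℝ) + 1) + a + b + 2) /
            (2 * (((K : ℝ) + 1) + 1) * (((K : ℝ) + 1) + a + b + 1))) * X -
        C ((b ^ 2 - a ^ 2) * (2 * ((K : ℝ) + 1) + a + b + 1) /
            (2 * (((K : ℝ) + 1) + 1) * (((K : ℝ) + 1) + a + b + 1) *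
              (2 * ((K : ℝ) + 1) + a + b)))) * jp a b (K + 1) -
      C ((((K : ℝ) + 1) + a) * (((K : ℝ) + 1) + b) * (2 * ((K : ℝ) + 1) + a + b + 2) /
            ((((K : ℝ) + 1) + 1) * (((K : ℝ) + 1) + a + b + 1) * (2 * ((K : ℝ) + 1) + a + b))) *
        jp a b K

lemma jp_eval (a b : ℝ) (x : ℝ) : ∀ n, (jp a b n).eval x = jacobiP a b n x
  | 0 => by simp [jp, jacobiP]
  | 1 => by simp [jp, jacobiP]; ring
  | K + 2 => by
      have h1 := jp_eval a b x (K + 1)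
      have h2 := jp_eval a b x K
      simp only [jp, jacobiP, Polynomial.eval_sub, Polynomial.eval_mul, Polynomial.eval_C,
        Polynomial.eval_X, h1, h2]

open Polynomial in
lemma jp_rec (a b : ℝ) (hs : -1 < a + b) (K : ℕ) :
    C (2 * ((K : ℝ) + 2) * ((K : ℝ) + a + b + 2) * (2 * (K : ℝ) + a + b + 2)) * jp a b (K + 2) =
      (C ((2 * (K : ℝ) + a + b + 3) * (2 * (K : ℝ) + a + b + 2) * (2 * (K : ℝ) + a + b + 4)) * X
        + C ((2 * (K : ℝ) + a + b + 3) * (a ^ 2 - b ^ 2))) * jp a b (K + 1)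
      - C (2 * ((K : ℝ) + 1 + a) * ((K : ℝ) + 1 + b) * (2 * (K : ℝ) + a + b + 4)) * jp a b K := by
  have hK : (0 : ℝ) ≤ K := Nat.cast_nonneg K
  have h1 : (K : ℝ) + 1 + 1 ≠ 0 := by positivity
  have h2 : (K : ℝ) + 1 + a + b + 1 ≠ 0 := by linarith
  have h3 : 2 * ((K : ℝ) + 1) + a + b ≠ 0 := by linarith
  apply Polynomial.funext
  intro x
  simp only [jp, Polynomial.eval_sub, Polynomial.eval_add, Polynomial.eval_mul, Polynomial.eval_C,
        Polynomial.eval_X]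
  field_simp
  ring

open Polynomial in
lemma jp_rec_eval (a b : ℝ) (hs : -1 < a + b) (K : ℕ) (x : ℝ) :
    (2 * ((K : ℝ) + 2) * ((K : ℝ) + a + b + 2) * (2 * (K : ℝ) + a + b + 2)) *
        (jp a b (K + 2)).eval x =
      ((2 * (K : ℝ) + a + b + 3) * (2 * (K : ℝ) + a + b + 2) * (2 * (K : ℝ) + a + b + 4) * x
        + (2 * (K : ℝ) + a + b + 3) * (a ^ 2 - b ^ 2)) * (jp a b (K + 1)).eval x
      - (2 * ((K : ℝ) + 1 + a) * ((K : ℝ) + 1 + b) * (2 * (K : ℝ) + a + b + 4)) *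
        (jp a b K).eval x := by
  have h := congrArg (Polynomial.eval x) (jp_rec a b hs K)
  simpa only [Polynomial.eval_sub, Polynomial.eval_add, Polynomial.eval_mul, Polynomial.eval_C,
        Polynomial.eval_X] using h

open Polynomial in
lemma jp_drec_eval (a b : ℝ) (hs : -1 < a + b) (K : ℕ) (x : ℝ) :
    (2 * ((K : ℝ) + 2) * ((K : ℝ) + a + b + 2) * (2 * (K : ℝ) + a + b + 2)) *
        (derivative (jp a b (K + 2))).eval x =
      (2 * (K : ℝ) + a + b + 3) * (2 * (K : ℝ) + a + b + 2) * (2 * (K : ℝ) + a + b + 4) *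
        (jp a b (K + 1)).eval x +
      ((2 * (K : ℝ) + a + b + 3) * (2 * (K : ℝ) + a + b + 2) * (2 * (K : ℝ) + a + b + 4) * x
        + (2 * (K : ℝ) + a + b + 3) * (a ^ 2 - b ^ 2)) * (derivative (jp a b (K + 1))).eval x
      - (2 * ((K : ℝ) + 1 + a) * ((K : ℝ) + 1 + b) * (2 * (K : ℝ) + a + b + 4)) *
        (derivative (jp a b K)).eval x := by
  have h := congrArg (fun p => Polynomial.eval x (derivative p)) (jp_rec a b hs K)
  simp only [derivative_sub, derivative_add, derivative_mul, derivative_C, derivative_X,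
    Polynomial.eval_sub, Polynomial.eval_add, Polynomial.eval_mul, Polynomial.eval_C,
    Polynomial.eval_X, Polynomial.eval_zero, Polynomial.eval_one] at h
  linear_combination h

set_option maxRecDepth 20000 in
set_option maxHeartbeats 1000000 in
open Polynomial in
/-- Raising and lowering structure relations. -/
lemma jp_struct (a b : ℝ) (hs : -1 < a + b) (x : ℝ) (n : ℕ) :
    ((2 * (n : ℝ) + a + b + 2) * (1 - x ^ 2) * (derivative (jp a b n)).eval x =
      ((n : ℝ) + a + b + 1) * (a - b + (2 * (n : ℝ) + a + b + 2) * x) * (jp a b n).eval x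
        - 2 * ((n : ℝ) + 1) * ((n : ℝ) + a + b + 1) * (jp a b (n + 1)).eval x) ∧
    ((2 * (n : ℝ) + a + b + 2) * (1 - x ^ 2) * (derivative (jp a b (n + 1))).eval x =
      ((n : ℝ) + 1) * (a - b - (2 * (n : ℝ) + a + b + 2) * x) * (jp a b (n + 1)).eval x
        + 2 * ((n : ℝ) + 1 + a) * ((n : ℝ) + 1 + b) * (jp a b n).eval x) := by
  induction n with
  | zero =>
    constructor
    · simp [jp]; ring
    · simp [jp]; ring
  | succ n ih =>
    obtain ⟨ht, hl⟩ := ih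
    have hr := jp_rec_eval a b hs n x
    have hd := jp_drec_eval a b hs n x
    have hK : (0 : ℝ) ≤ n := Nat.cast_nonneg n
    have h1 : (n : ℝ) + 2 ≠ 0 := by positivity
    have h2 : (n : ℝ) + a + b + 2 ≠ 0 := by linarith
    have h3 : 2 * (n : ℝ) + a + b + 2 ≠ 0 := by linarith
    push_cast
    rw [show n + 1 + 1 = n + 2 from rfl]
    generalize (derivative (jp a b (n + 2))).eval x = D2 at *
    generalize (derivative (jp a b (n + 1))).eval x = D1 at *
    generalize (derivative (jp a b n)).eval x = D0 at *
    generalize (jp a b (n + 2)).eval x = P2 at *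
    generalize (jp a b (n + 1)).eval x = P1 at *
    generalize (jp a b n).eval x = P0 at *
    generalize (n : ℝ) = m at *
    constructor
    · apply mul_left_cancel₀ h3
      linear_combination (2 * m + a + b + 4) * hl + hr
    · have := alg1 m (2 * m + a + b + 2) (a - b) x P0 P1 P2 ((1 - x ^ 2) * D0) ((1 - x ^ 2) * D1)
        ((1 - x ^ 2) * D2) h1 (by intro h; apply h2; linarith) h3
        (by linear_combination (1 - x ^ 2) * hd) (by linear_combination hr)
        (by linear_combination hl) (by linear_combination ht)
      linear_combination this

open Polynomial in
lemma poly_cancel (p q : ℝ[X]) (h : ∀ x : ℝ, (1 - x ^ 2) * p.eval x = (1 - x ^ 2) * q.eval x) :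
    p = q := by
  have h0 : (1 - X ^ 2 : ℝ[X]) ≠ 0 := by
    intro h
    have := congrArg (Polynomial.eval 0) h
    simp at this
  apply mul_left_cancel₀ h0
  apply Polynomial.funext
  intro x
  simpa using h x

set_option maxRecDepth 20000 in
set_option maxHeartbeats 2000000 in
open Polynomial in
lemma jp_deriv (a b : ℝ) (hs : -1 < a + b) : ∀ n : ℕ,
    derivative (jp a b (n + 1)) = C (((n : ℝ) + a + b + 2) / 2) * jp (a + 1) (b + 1) n
  | 0 => by simp [jp]
  | 1 => by
      apply Polynomial.funext
      intro x
      have hd := jp_drec_eval a b hs 0 x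
      have h2 : a + b + 2 ≠ 0 := by linarith
      simp [jp] at hd ⊢
      apply mul_left_cancel₀ (mul_ne_zero h2 h2)
      linear_combination (1/4) * hd
  | K + 2 => by
      have e1 := jp_deriv a b hs (K + 1)
      have e0 := jp_deriv a b hs K
      apply poly_cancel
      intro x
      have e1' := congrArg (Polynomial.eval x) e1
      have e0' := congrArg (Polynomial.eval x) e0
      have hq := jp_rec_eval (a + 1) (b + 1) (by linarith) K x
      obtain ⟨ht, -⟩ := jp_struct a b hs x (K + 1)
      have hr := jp_rec_eval a b hs (K + 1) x
      obtain ⟨-, hl1⟩ := jp_struct a b hs x (K + 1)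
      obtain ⟨ht1, hl2⟩ := jp_struct a b hs x (K + 2)
      have hK : (0 : ℝ) ≤ K := Nat.cast_nonneg K
      have h1 : (K : ℝ) + 2 ≠ 0 := by positivity
      have h10 : (K : ℝ) + 3 ≠ 0 := by positivity
      have h2 : (K : ℝ) + a + b + 2 ≠ 0 := by linarith
      have h3 : 2 * (K : ℝ) + a + b + 4 ≠ 0 := by linarith
      have h4 : (K : ℝ) + a + b + 3 ≠ 0 := by linarith
      have h5 : (K : ℝ) + a + b + 4 ≠ 0 := by linarith
      have h6 : 2 * (K : ℝ) + a + b + 6 ≠ 0 := by linarith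
      simp only [Polynomial.eval_mul, Polynomial.eval_C] at e1' e0' ⊢
      push_cast at *
      simp only [show K + 1 + 1 = K + 2 from rfl, show K + 2 + 1 = K + 3 from rfl,
        show K + 1 + 2 = K + 3 from rfl] at *
      generalize (derivative (jp a b (K + 3))).eval x = D3 at *
      generalize (derivative (jp a b (K + 2))).eval x = D2 at *
      generalize (derivative (jp a b (K + 1))).eval x = D1 at *
      generalize (jp (a + 1) (b + 1) (K + 2)).eval x = Q2 at *
      generalize (jp (a + 1) (b + 1) (K + 1)).eval x = Q1 at *
      generalize (jp (a + 1) (b + 1) K).eval x = Q0 at *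
      generalize (jp a b (K + 3)).eval x = P3 at *
      generalize (jp a b (K + 2)).eval x = P2 at *
      generalize (jp a b (K + 1)).eval x = P1 at *
      generalize (K : ℝ) = k at *
      clear e0 e1 hK
      have h7 : 2 * k + a + b + 4 - k - 1 ≠ 0 := by intro h; apply h4; linarith
      have h8 : 2 * k + a + b + 4 - k - 2 ≠ 0 := by intro h; apply h2; linarith
      have h9 : 2 * k + a + b + 4 + 2 ≠ 0 := by intro h; apply h6; linarith
      have H := alg2 k (2 * k + a + b + 4) (a - b) x P1 P2 P3 ((1 - x ^ 2) * D1)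
        ((1 - x ^ 2) * D2) ((1 - x ^ 2) * D3) h7 h9 h3 h10
        (by linear_combination hl2) (by linear_combination hl1)
        (by linear_combination ht) (by linear_combination hr)
      have := alg3 k (2 * k + a + b + 4) _ _ ((1 - x ^ 2) * D1)
        ((1 - x ^ 2) * D2) ((1 - x ^ 2) * D3) ((1 - x ^ 2) * Q0) ((1 - x ^ 2) * Q1)
        ((1 - x ^ 2) * Q2) h1 h3 h7 h8 H (by linear_combination (1 - x ^ 2) * hq)
        (by linear_combination (1 - x ^ 2) * e1') (by linear_combination (1 - x ^ 2) * e0')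
      linear_combination this

open Polynomial in
lemma jp_deg (a b : ℝ) (hs : -1 < a + b) : ∀ n : ℕ,
    (jp a b n).natDegree ≤ n ∧ (jp a b n).coeff n ≠ 0
  | 0 => by simp [jp]
  | 1 => by
      constructor
      · simp only [jp]; compute_degree
      · simp [jp, coeff_one, coeff_C]; linarith
  | K + 2 => by
      obtain ⟨h1, h1'⟩ := jp_deg a b hs (K + 1)
      obtain ⟨h0, -⟩ := jp_deg a b hs K
      have hK : (0 : ℝ) ≤ K := Nat.cast_nonneg K
      constructor
      · simp only [jp]
        refine (natDegree_sub_le _ _).trans (max_le ?_ ?_)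
        · refine natDegree_mul_le.trans ?_
          have : ∀ p q : ℝ, (C p * X - C q : ℝ[X]).natDegree ≤ 1 := by
            intro p q; compute_degree
          have := this ((2 * ((K : ℝ) + 1) + a + b + 1) * (2 * ((K : ℝ) + 1) + a + b + 2) /
            (2 * (((K : ℝ) + 1) + 1) * (((K : ℝ) + 1) + a + b + 1)))
            ((b ^ 2 - a ^ 2) * (2 * ((K : ℝ) + 1) + a + b + 1) /
            (2 * (((K : ℝ) + 1) + 1) * (((K : ℝ) + 1) + a + b + 1) *
              (2 * ((K : ℝ) + 1) + a + b)))
          omega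
        · refine (natDegree_C_mul_le _ _).trans ?_
          omega
      · simp only [jp, sub_mul, mul_assoc, coeff_sub, coeff_C_mul, coeff_X_mul]
        rw [coeff_eq_zero_of_natDegree_lt (show (jp a b (K + 1)).natDegree < K + 2 by omega),
          coeff_eq_zero_of_natDegree_lt (show (jp a b K).natDegree < K + 2 by omega)]
        simp only [mul_zero, sub_zero]
        refine mul_ne_zero (div_ne_zero (mul_ne_zero ?_ ?_) (mul_ne_zero ?_ (mul_ne_zero ?_ ?_))) h1'
        all_goals linarith

open Polynomial in
/-- `c · ∏ (X - u_i) = G · (X - 1)`. -/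
lemma prod_eq (n : ℕ) (G : ℝ[X]) (hd : G.natDegree ≤ n) (hc : G.coeff n ≠ 0)
    (v : Fin (n + 1) → ℝ) (hv : Function.Injective v)
    (hr : ∀ i, (G * (X - C 1)).eval (v i) = 0) :
    C (G.coeff n) * ∏ i, (X - C (v i)) = G * (X - C 1) := by
  have hG0 : G ≠ 0 := by rintro rfl; simp at hc
  have hn : G.natDegree = n := le_antisymm hd (le_natDegree_of_ne_zero hc)
  have hm : (∏ i, (X - C (v i))).Monic := monic_prod_of_monic _ _ fun i _ => monic_X_sub_C _
  have hdeg : (∏ i, (X - C (v i))).natDegree = n + 1 := by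
    rw [natDegree_prod_of_monic _ _ fun i _ => monic_X_sub_C _]; simp
  have hG1 : (G * (X - C 1)).natDegree = n + 1 := by
    rw [natDegree_mul hG0 (X_sub_C_ne_zero _), natDegree_X_sub_C, hn]
  have hne : G * (X - C 1) ≠ 0 := mul_ne_zero hG0 (X_sub_C_ne_zero _)
  have hl : (G * (X - C 1)).leadingCoeff = G.coeff n := by
    rw [leadingCoeff_mul, leadingCoeff_X_sub_C, mul_one, leadingCoeff, hn]
  have hlt := degree_sub_lt (p := G * (X - C 1)) (q := C (G.coeff n) * ∏ i, (X - C (v i)))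
    (by
      rw [degree_eq_natDegree hne, hG1, degree_C_mul hc, degree_eq_natDegree hm.ne_zero, hdeg])
    hne (by rw [hl, leadingCoeff_mul, leadingCoeff_C, hm.leadingCoeff, mul_one])
  rw [degree_eq_natDegree hne, hG1] at hlt
  refine (Polynomial.eq_of_degree_sub_lt_of_eval_index_eq (s := Finset.univ) (v := v) hv.injOn
    (by simpa using hlt) ?_).symm
  intro i _
  rw [hr i, eval_mul, eval_prod, Finset.prod_eq_zero (Finset.mem_univ i) (by simp), mul_zero]

/-- Derivative of a product at a zero of one of its factors. -/
lemma deriv_prod_zero {ι : Type*} [DecidableEq ι] (s : Finset ι) (u : ℝ → ℝ)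
    (hu : Differentiable ℝ u) (v : ι → ℝ) (k : ι) (hk : k ∈ s) (t : ℝ) (ht : u t = v k) :
    HasDerivAt (fun t => ∏ i ∈ s, (u t - v i))
      (deriv u t * ∏ i ∈ s.erase k, (u t - v i)) t := by
  have e : (fun t => ∏ i ∈ s, (u t - v i)) =
      fun t => (u t - v k) * ∏ i ∈ s.erase k, (u t - v i) := by
    funext t
    rw [Finset.mul_prod_erase s (fun i => u t - v i) hk]
  rw [e]
  have h1 : HasDerivAt (fun t => u t - v k) (deriv u t) t :=
    (hu t).hasDerivAt.sub_const _
  have h2 : DifferentiableAt ℝ (fun t => ∏ i ∈ s.erase k, (u t - v i)) t := by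
    fun_prop
  have := h1.mul h2.hasDerivAt
  rw [ht, sub_self, zero_mul, add_zero] at this
  rw [ht]
  exact this

theorem gl_jacobi_radau_interior (α β : ℝ) (hα : -1 < α) (hβ : -1 < β)
    (n : ℕ) (hn : 1 ≤ n) (u : ℝ → ℝ) (x : Fin (n + 1) → ℝ)
    (hu : Differentiable ℝ u)
    (hx : Function.Injective x)
    (hux : Function.Injective (u ∘ x))
    (hu' : ∀ i, deriv u (x i) ≠ 0)
    (hroots : ∀ i : Fin (n + 1), (i : ℕ) < n → jacobiP α (β + 1) n (u (x i)) = 0)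
    (hlast : u (x (Fin.last n)) = 1)
    (j k : Fin (n + 1)) (hj : (j : ℕ) < n) (hk : (k : ℕ) < n) (hjk : j ≠ k) :
    deriv (glL u x j) (x k) =
      (deriv u (x k) * (u (x k) - u (x (Fin.last n))) /
          ((u (x j) - u (x (Fin.last n))) * (u (x k) - u (x j)))) *
        (jacobiP (α + 1) (β + 2) (n - 1) (u (x k)) /
          jacobiP (α + 1) (β + 2) (n - 1) (u (x j))) := by
  obtain ⟨m, rfl⟩ : ∃ m, n = m + 1 := ⟨n - 1, by omega⟩
  have hs : -1 < α + (β + 1) := by linarith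
  obtain ⟨hd, hc⟩ := jp_deg α (β + 1) hs (m + 1)
  set G := jp α (β + 1) (m + 1) with hG
  have hroot : ∀ i : Fin (m + 1 + 1), (i : ℕ) < m + 1 → G.eval (u (x i)) = 0 := by
    intro i hi
    rw [hG, jp_eval]
    exact hroots i hi
  have hprod := prod_eq (m + 1) G hd hc (fun i => u (x i)) hux (by
    intro i
    by_cases hi : (i : ℕ) < m + 1
    · rw [Polynomial.eval_mul, hroot i hi, zero_mul]
    · have : i = Fin.last (m + 1) := by
        apply Fin.ext; have := i.2; simp; omega
      rw [this, hlast]; simp)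
  have key : ∀ i : Fin (m + 1 + 1), (i : ℕ) < m + 1 →
      G.coeff (m + 1) * ∏ l ∈ Finset.univ.erase i, (u (x i) - u (x l)) =
        ((m : ℝ) + α + β + 3) / 2 * jacobiP (α + 1) (β + 2) m (u (x i)) * (u (x i) - 1) := by
    intro i hi
    have h1 := deriv_prod_zero Finset.univ (fun t => t) differentiable_id (fun l => u (x l)) i
      (Finset.mem_univ i) (u (x i)) rfl
    have h2 := h1.const_mul (G.coeff (m + 1))
    have h3 : HasDerivAt (fun t => (G * (Polynomial.X - Polynomial.C 1)).eval t)
        (((G * (Polynomial.X - Polynomial.C 1)).derivative).eval (u (x i))) (u (x i)) :=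
      Polynomial.hasDerivAt _ _
    rw [← hprod] at h3
    have e : (fun t => (Polynomial.C (G.coeff (m + 1)) *
        ∏ l, (Polynomial.X - Polynomial.C (u (x l)))).eval t) =
        fun t => G.coeff (m + 1) * ∏ l, (t - u (x l)) := by
      funext t
      simp [Polynomial.eval_prod]
    rw [e, hprod] at h3
    have h4 := h2.unique h3
    rw [Polynomial.derivative_mul, Polynomial.eval_add, Polynomial.eval_mul, Polynomial.eval_mul,
      hroot i hi, zero_mul, add_zero, hG, jp_deriv α (β + 1) hs m, Polynomial.eval_mul,
      jp_eval] at h4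
    simp only [deriv_id'', one_mul, Polynomial.eval_C, Polynomial.eval_sub, Polynomial.eval_X] at h4
    rw [show β + 1 + 1 = β + 2 by ring] at h4
    rw [h4]
    ring
  have hne : ∀ i l : Fin (m + 1 + 1), i ≠ l → u (x i) - u (x l) ≠ 0 := by
    intro i l hil h
    exact hil (hux (sub_eq_zero.mp h))
  have hW : deriv (glW u x) (x j) =
      deriv u (x j) * ∏ i ∈ Finset.univ.erase j, (u (x j) - u (x i)) :=
    (deriv_prod_zero Finset.univ u hu (fun l => u (x l)) j (Finset.mem_univ j) (x j) rfl).deriv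
  have hL : deriv (glL u x j) (x k) = (deriv u (x j) / deriv (glW u x) (x j)) *
      (deriv u (x k) * ∏ i ∈ (Finset.univ.erase j).erase k, (u (x k) - u (x i))) :=
    ((deriv_prod_zero (Finset.univ.erase j) u hu (fun l => u (x l)) k
      (Finset.mem_erase.mpr ⟨hjk.symm, Finset.mem_univ k⟩) (x k) rfl).const_mul _).deriv
  have hsplit : (u (x k) - u (x j)) *
      ∏ i ∈ (Finset.univ.erase j).erase k, (u (x k) - u (x i)) =
      ∏ i ∈ Finset.univ.erase k, (u (x k) - u (x i)) := by
    rw [Finset.erase_right_comm]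
    exact Finset.mul_prod_erase _ (fun i => u (x k) - u (x i))
      (Finset.mem_erase.mpr ⟨hjk, Finset.mem_univ j⟩)
  have kj := key j hj
  have kk := key k hk
  rw [← hsplit] at kk
  have hA : ∏ i ∈ Finset.univ.erase j, (u (x j) - u (x i)) ≠ 0 :=
    Finset.prod_ne_zero_iff.mpr fun i hi => hne j i (Finset.ne_of_mem_erase hi).symm
  have hkj := hne k j hjk.symm
  have huj := hu' j
  have hj1 : u (x j) - 1 ≠ 0 := by
    rw [← hlast]
    exact hne j _ (by rintro rfl; simp at hj)
  have hm0 : (0 : ℝ) ≤ m := Nat.cast_nonneg m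
  have hs2 : (m : ℝ) + α + β + 3 ≠ 0 := by linarith
  rw [hL, hW, hlast, Nat.add_sub_cancel]
  generalize ∏ i ∈ Finset.univ.erase j, (u (x j) - u (x i)) = A at *
  generalize ∏ i ∈ (Finset.univ.erase j).erase k, (u (x k) - u (x i)) = B at *
  generalize jacobiP (α + 1) (β + 2) m (u (x j)) = Qj at *
  generalize jacobiP (α + 1) (β + 2) m (u (x k)) = Qk at *
  generalize G.coeff (m + 1) = c at *
  have hQj : Qj ≠ 0 := by
    rintro rfl
    rw [mul_zero, zero_mul] at kj
    exact mul_ne_zero hc hA kj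
  have hB : B * (u (x k) - u (x j)) * ((u (x j) - 1) * Qj) = A * (Qk * (u (x k) - 1)) := by
    apply mul_left_cancel₀ (mul_ne_zero hc hs2)
    linear_combination ((m : ℝ) + α + β + 3) * (u (x j) - 1) * Qj * kk
      - ((m : ℝ) + α + β + 3) * (u (x k) - 1) * Qk * kj
  rw [div_mul_eq_mul_div, div_mul_div_comm, div_eq_div_iff (mul_ne_zero huj hA)
    (mul_ne_zero (mul_ne_zero hj1 hkj) hQj)]
  linear_combination deriv u (x j) * deriv u (x k) * hB
end
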